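/- arXiv:math/0512621 — 2 statements merged into one kernel-verified Lean document; each statement's English description precedes it below -/
import Mathlib

section
/- There is no indecomposable representation of the Kronecker quiver with dimension vector (a, b) when |a - b| ≥ 2. Specifically, every representation ((V_0, V_1), (f, g)) with |dim V_0 - dim V_1| ≥ 2 is decomposable. -/
noncomputable section

/-- A representation of the Kronecker quiver: two complex vector spaces and two
linear maps `f, g : V0 → V1`. -/
structure KronRep : Type 1 where
  V0 : Type
  V1 : Type
  [acg0 : AddCommGroup V0]
  [acg1 : AddCommGroup V1]
  [mod0 : Module ℂ V0]
  [mod1 : Module ℂ V1]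
  f : V0 →ₗ[ℂ] V1
  g : V0 →ₗ[ℂ] V1

attribute [instance] KronRep.acg0 KronRep.acg1 KronRep.mod0 KronRep.mod1

/-- Isomorphism of Kronecker quiver representations. -/
def KronRep.Iso (M N : KronRep) : Prop :=
  ∃ (e0 : M.V0 ≃ₗ[ℂ] N.V0) (e1 : M.V1 ≃ₗ[ℂ] N.V1),
    (∀ x, e1 (M.f x) = N.f (e0 x)) ∧ (∀ x, e1 (M.g x) = N.g (e0 x))

/-- Direct sum of two Kronecker quiver representations. -/
def KronRep.prod (M N : KronRep) : KronRep where
  V0 := M.V0 × N.V0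
  V1 := M.V1 × N.V1
  f := M.f.prodMap N.f
  g := M.g.prodMap N.g

/-- The zero representation. -/
def KronRep.IsZero (M : KronRep) : Prop :=
  (∀ x : M.V0, x = 0) ∧ (∀ x : M.V1, x = 0)

/-- A representation is indecomposable if it is nonzero and any direct sum
decomposition has a zero summand. -/
def KronRep.Indecomposable (M : KronRep) : Prop :=
  ¬ M.IsZero ∧ ∀ N P : KronRep, M.Iso (N.prod P) → N.IsZero ∨ P.IsZero

/-- The representation `((ℂ, ℂ), (r, r̄))` given by a pair of scalars. -/
def scalarRep (r rb : ℂ) : KronRep where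
  V0 := ℂ
  V1 := ℂ
  f := r • LinearMap.id
  g := rb • LinearMap.id

/-!
Suppose `dim V₁ + 1 < dim V₀`. If `(f, g) : V₀ → V₁ × V₁` is not injective, a line in its kernel
splits off. Otherwise `dim V₀ ≤ 2 dim V₁`, which forces `V₁` to be finite-dimensional. Let `Q` be
the cokernel; the two components `V₁ → Q` of the quotient map form the Bernstein–Gelfand–Ponomarev
reflection of the pair. An idempotent `q` of `V₁` extends to an endomorphism of either pair exactly
when `q × q` preserves the subspace `V₀ ⊆ V₁ × V₁`, so the two pairs decompose simultaneously.
Since `dim Q = 2 dim V₁ - dim V₀`, again `dim Q + 1 < dim V₁`, and induction on the dimension of the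
codomain applies. The case `dim V₀ + 1 < dim V₁` is dual, with the kernel of `V₀ × V₀ → V₁` in place
of the cokernel.
-/

universe u

section Ring

variable {R V W Q : Type*} [Ring R] [AddCommGroup V] [AddCommGroup W] [AddCommGroup Q]
  [Module R V] [Module R W] [Module R Q]

/-- Decomposability of the Kronecker representation `f, g : V → W`. A direct sum decomposition is
encoded by the projection onto one summand, an idempotent endomorphism `e = (e.1, e.2)` of the
representation; both summands are nonzero exactly when `e ≠ 0` and `e ≠ 1`. -/
def DecomposablePair (f g : V →ₗ[R] W) : Prop :=
  ∃ e : Module.End R V × Module.End R W, IsIdempotentElem e ∧ e ≠ 0 ∧ e ≠ 1 ∧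
    e.2 ∘ₗ f = f ∘ₗ e.1 ∧ e.2 ∘ₗ g = g ∘ₗ e.1

theorem exists_comp_eq_of_range_le_range {φ : V →ₗ[R] W} (hφ : Function.Injective φ)
    {ψ : Q →ₗ[R] W} (h : ψ.range ≤ φ.range) : ∃ p : Q →ₗ[R] V, φ ∘ₗ p = ψ := by
  refine ⟨(LinearEquiv.ofInjective φ hφ).symm ∘ₗ
    ψ.codRestrict φ.range fun x => h ⟨x, rfl⟩, LinearMap.ext fun x => ?_⟩
  exact congrArg Subtype.val ((LinearEquiv.ofInjective φ hφ).apply_symm_apply _)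

theorem exists_comp_eq_of_ker_le_ker {π : V →ₗ[R] Q} (hπ : Function.Surjective π)
    {ψ : V →ₗ[R] W} (h : π.ker ≤ ψ.ker) : ∃ r : Q →ₗ[R] W, r ∘ₗ π = ψ := by
  refine ⟨π.ker.liftQ ψ h ∘ₗ (π.quotKerEquivOfSurjective hπ).symm, LinearMap.ext fun x => ?_⟩
  have hx : (π.quotKerEquivOfSurjective hπ).symm (π x) = π.ker.mkQ x :=
    (LinearEquiv.symm_apply_eq _).2 rfl
  simp [hx]

theorem prodMap_comp_prod_eq_iff {f g : V →ₗ[R] W} {p : Module.End R V} {q : Module.End R W} :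
    q.prodMap q ∘ₗ f.prod g = f.prod g ∘ₗ p ↔ q ∘ₗ f = f ∘ₗ p ∧ q ∘ₗ g = g ∘ₗ p := by
  simp [LinearMap.ext_iff, forall_and]

theorem comp_coprod_eq_iff {f g : V →ₗ[R] W} {p : Module.End R V} {q : Module.End R W} :
    q ∘ₗ f.coprod g = f.coprod g ∘ₗ p.prodMap p ↔ q ∘ₗ f = f ∘ₗ p ∧ q ∘ₗ g = g ∘ₗ p := by
  rw [LinearMap.prod_ext_iff]
  simp [LinearMap.ext_iff]

theorem decomposablePair_iff_of_injective {f g : V →ₗ[R] W}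
    (hinj : Function.Injective (f.prod g)) :
    DecomposablePair f g ↔ ∃ q : Module.End R W, IsIdempotentElem q ∧ q ≠ 0 ∧ q ≠ 1 ∧
      (f.prod g).range ≤ (f.prod g).range.comap (q.prodMap q) := by
  constructor
  · rintro ⟨⟨p, q⟩, he, he0, he1, hfg⟩
    have hpq := prodMap_comp_prod_eq_iff.2 hfg
    refine ⟨q, congrArg Prod.snd he, ?_, ?_, ?_⟩
    · rintro rfl
      have hp : p = 0 := (LinearMap.cancel_left hinj).1 (by rw [← hpq]; ext <;> simp)
      exact he0 (by rw [hp]; rfl)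
    · rintro rfl
      have hp : p = 1 := (LinearMap.cancel_left hinj).1 (by rw [← hpq]; ext <;> simp)
      exact he1 (by rw [hp]; rfl)
    · rintro _ ⟨x, rfl⟩
      exact ⟨p x, (LinearMap.congr_fun hpq x).symm⟩
  · rintro ⟨q, hq, hq0, hq1, hstable⟩
    rw [← Submodule.map_le_iff_le_comap, ← LinearMap.range_comp] at hstable
    obtain ⟨p, hp⟩ := exists_comp_eq_of_range_le_range hinj hstable
    have hpp : IsIdempotentElem p := by
      refine (LinearMap.cancel_left hinj).1 ?_
      calc f.prod g ∘ₗ (p ∘ₗ p) = q.prodMap q ∘ₗ (q.prodMap q ∘ₗ f.prod g) := by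
            rw [← LinearMap.comp_assoc, hp, LinearMap.comp_assoc, hp]
        _ = (q * q).prodMap (q * q) ∘ₗ f.prod g := rfl
        _ = f.prod g ∘ₗ p := by rw [hq.eq, hp]
    exact ⟨(p, q), Prod.ext hpp hq, fun h => hq0 (congrArg Prod.snd h),
      fun h => hq1 (congrArg Prod.snd h), prodMap_comp_prod_eq_iff.1 hp.symm⟩

theorem decomposablePair_iff_of_surjective {f g : V →ₗ[R] W}
    (hsurj : Function.Surjective (f.coprod g)) :
    DecomposablePair f g ↔ ∃ p : Module.End R V, IsIdempotentElem p ∧ p ≠ 0 ∧ p ≠ 1 ∧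
      (f.coprod g).ker ≤ (f.coprod g).ker.comap (p.prodMap p) := by
  constructor
  · rintro ⟨⟨p, q⟩, he, he0, he1, hfg⟩
    have hpq := comp_coprod_eq_iff.2 hfg
    refine ⟨p, congrArg Prod.fst he, ?_, ?_, fun z hz => ?_⟩
    · rintro rfl
      have hq : q = 0 := (LinearMap.cancel_right hsurj).1 (by rw [hpq]; ext <;> simp)
      exact he0 (by rw [hq]; rfl)
    · rintro rfl
      have hq : q = 1 := (LinearMap.cancel_right hsurj).1 (by rw [hpq]; ext <;> simp)
      exact he1 (by rw [hq]; rfl)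
    · have hqz := LinearMap.congr_fun hpq z
      rw [LinearMap.comp_apply, LinearMap.mem_ker.1 hz, map_zero] at hqz
      exact hqz.symm
  · rintro ⟨p, hp, hp0, hp1, hstable⟩
    obtain ⟨q, hq⟩ := exists_comp_eq_of_ker_le_ker hsurj
      (ψ := f.coprod g ∘ₗ p.prodMap p) hstable
    have hqq : IsIdempotentElem q := by
      refine (LinearMap.cancel_right hsurj).1 ?_
      calc (q ∘ₗ q) ∘ₗ f.coprod g = (f.coprod g ∘ₗ p.prodMap p) ∘ₗ p.prodMap p := by
            rw [LinearMap.comp_assoc, hq, ← LinearMap.comp_assoc, hq]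
        _ = f.coprod g ∘ₗ (p * p).prodMap (p * p) := rfl
        _ = q ∘ₗ f.coprod g := by rw [hp.eq, hq]
    exact ⟨(p, q), Prod.ext hp hqq, fun h => hp0 (congrArg Prod.fst h),
      fun h => hp1 (congrArg Prod.fst h), comp_coprod_eq_iff.1 hq⟩

theorem decomposablePair_iff_of_exact {f g : V →ₗ[R] W} {f' g' : W →ₗ[R] Q}
    (hinj : Function.Injective (f.prod g)) (hsurj : Function.Surjective (f'.coprod g'))
    (hexact : Function.Exact (f.prod g) (f'.coprod g')) :
    DecomposablePair f g ↔ DecomposablePair f' g' := by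
  rw [decomposablePair_iff_of_injective hinj, decomposablePair_iff_of_surjective hsurj,
    hexact.linearMap_ker_eq]

theorem decomposablePair_iff_cokernel {f g : V →ₗ[R] W} (hinj : Function.Injective (f.prod g)) :
    DecomposablePair f g ↔ DecomposablePair ((f.prod g).range.mkQ ∘ₗ LinearMap.inl R W W)
      ((f.prod g).range.mkQ ∘ₗ LinearMap.inr R W W) := by
  refine decomposablePair_iff_of_exact hinj ?_ ?_ <;> rw [LinearMap.coprod_comp_inl_inr]
  · exact (f.prod g).range.mkQ_surjective
  · exact LinearMap.exact_map_mkQ_range (f.prod g)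

theorem decomposablePair_iff_kernel {f g : V →ₗ[R] W} (hsurj : Function.Surjective (f.coprod g)) :
    DecomposablePair f g ↔ DecomposablePair (LinearMap.fst R V V ∘ₗ (f.coprod g).ker.subtype)
      (LinearMap.snd R V V ∘ₗ (f.coprod g).ker.subtype) := by
  refine (decomposablePair_iff_of_exact ?_ hsurj ?_).symm
  · exact (f.coprod g).ker.subtype_injective
  · exact LinearMap.exact_subtype_ker_map (f.coprod g)

theorem decomposablePair_of_not_injective [IsSemisimpleModule R V] (hV : ¬ IsSimpleModule R V)
    {f g : V →ₗ[R] W} (hinj : ¬ Function.Injective (f.prod g)) : DecomposablePair f g := by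
  rw [← LinearMap.ker_eq_bot] at hinj
  obtain ⟨A, hA, hAker⟩ := (eq_bot_or_exists_atom_le (f.prod g).ker).resolve_left hinj
  obtain ⟨B, hAB⟩ := exists_isCompl A
  have hker (x : V) : f.prod g (A.projection B hAB x) = 0 :=
    hAker (Submodule.projection_apply_mem hAB x)
  have hrange := Submodule.range_projection hAB
  refine ⟨(A.projection B hAB, 0),
    Prod.ext (Submodule.isIdempotentElem_projection hAB) (mul_zero 0),
    fun h => hA.1 ?_, fun h => hV ?_, ?_, ?_⟩
  · rw [← hrange, show A.projection B hAB = 0 from congrArg Prod.fst h, LinearMap.range_zero]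
  · have hAtop : A = ⊤ := by
      rw [← hrange, show A.projection B hAB = 1 from congrArg Prod.fst h]
      exact LinearMap.range_id
    exact (isSimpleModule_iff _ _).2 (isSimpleOrder_iff_isAtom_top.2 (hAtop ▸ hA))
  · exact LinearMap.ext fun x => (congrArg Prod.fst (hker x)).symm
  · exact LinearMap.ext fun x => (congrArg Prod.snd (hker x)).symm

theorem decomposablePair_of_not_surjective [IsSemisimpleModule R W] (hW : ¬ IsSimpleModule R W)
    {f g : V →ₗ[R] W} (hsurj : ¬ Function.Surjective (f.coprod g)) : DecomposablePair f g := by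
  rw [← LinearMap.range_eq_top] at hsurj
  obtain ⟨H, hH, hrangeH⟩ := (eq_top_or_exists_le_coatom (f.coprod g).range).resolve_left hsurj
  obtain ⟨L, hHL⟩ := exists_isCompl H
  have hvanish (z : V × V) : L.projection H hHL.symm (f.coprod g z) = 0 :=
    (Submodule.projection_apply_eq_zero_iff hHL.symm).2 (hrangeH ⟨z, rfl⟩)
  have hker := Submodule.ker_projection hHL.symm
  refine ⟨(0, L.projection H hHL.symm),
    Prod.ext (mul_zero 0) (Submodule.isIdempotentElem_projection hHL.symm),
    fun h => hH.1 ?_, fun h => hW ?_, ?_, ?_⟩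
  · rw [← hker, show L.projection H hHL.symm = 0 from congrArg Prod.snd h, LinearMap.ker_zero]
  · have hHbot : H = ⊥ := by
      rw [← hker, show L.projection H hHL.symm = 1 from congrArg Prod.snd h]
      exact LinearMap.ker_id
    exact (isSimpleModule_iff _ _).2 (isSimpleOrder_iff_isCoatom_bot.2 (hHbot ▸ hH))
  · ext x
    simpa using hvanish (x, 0)
  · ext x
    simpa using hvanish (0, x)

end Ring

section Rank

theorem cardinal_add_one_lt_of_add_eq_add_self {a b c : Cardinal.{u}} (h : a + b = c + c)
    (hcb : c + 1 < b) : a + 1 < c := by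
  have hc : c < Cardinal.aleph0 := by
    by_contra! hc
    have hbc : b ≤ c := by
      calc b ≤ a + b := self_le_add_left b a
        _ = c := by rw [h, Cardinal.add_eq_self hc]
    exact (hbc.trans (self_le_add_right c 1)).not_gt hcb
  have hab : a + b < Cardinal.aleph0 := h ▸ Cardinal.add_lt_aleph0 hc hc
  obtain ⟨ha, hb⟩ := Cardinal.add_lt_aleph0_iff.1 hab
  lift a to ℕ using ha
  lift b to ℕ using hb
  lift c to ℕ using hc
  norm_cast at h hcb ⊢
  omega

theorem rank_add_one_lt_or_of_two_le_abs_finrank_sub {R : Type*} {V W : Type u} [Ring R]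
    [StrongRankCondition R] [AddCommGroup V] [AddCommGroup W] [Module R V] [Module R W]
    [Module.Finite R V] [Module.Finite R W]
    (h : 2 ≤ |(Module.finrank R V : ℤ) - (Module.finrank R W : ℤ)|) :
    Module.rank R W + 1 < Module.rank R V ∨ Module.rank R V + 1 < Module.rank R W := by
  rw [← Module.finrank_eq_rank, ← Module.finrank_eq_rank]
  norm_cast
  grind

variable {K : Type*} [DivisionRing K]

theorem not_isSimpleModule_of_one_lt_rank {V : Type*} [AddCommGroup V] [Module K V]
    (h : 1 < Module.rank K V) : ¬ IsSimpleModule K V := by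
  rw [isSimpleModule_iff_finrank_eq_one, ← Module.rank_eq_one_iff_finrank_eq_one]
  exact h.ne'

theorem decomposablePair_of_rank_codomain_add_one_lt {V W : Type u} [AddCommGroup V]
    [AddCommGroup W] [Module K V] [Module K W] (f g : V →ₗ[K] W)
    (h : Module.rank K W + 1 < Module.rank K V) : DecomposablePair f g := by
  induction hW : Module.rank K W using WellFoundedLT.induction generalizing V W with
  | ind r ih =>
  subst hW
  by_cases hinj : Function.Injective (f.prod g)
  · have hrank : Module.rank K ((W × W) ⧸ (f.prod g).range) + Module.rank K V =
        Module.rank K W + Module.rank K W := by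
      rw [← rank_range_of_injective _ hinj, Submodule.rank_quotient_add_rank, rank_prod']
    have hgap := cardinal_add_one_lt_of_add_eq_add_self hrank h
    rw [decomposablePair_iff_cokernel hinj]
    exact ih _ ((self_le_add_right _ 1).trans_lt hgap) _ _ hgap rfl
  · exact decomposablePair_of_not_injective
      (not_isSimpleModule_of_one_lt_rank ((self_le_add_left 1 _).trans_lt h)) hinj

theorem decomposablePair_of_rank_domain_add_one_lt {V W : Type u} [AddCommGroup V]
    [AddCommGroup W] [Module K V] [Module K W] (f g : V →ₗ[K] W)
    (h : Module.rank K V + 1 < Module.rank K W) : DecomposablePair f g := by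
  induction hV : Module.rank K V using WellFoundedLT.induction generalizing V W with
  | ind r ih =>
  subst hV
  by_cases hsurj : Function.Surjective (f.coprod g)
  · have hrank : Module.rank K (f.coprod g).ker + Module.rank K W =
        Module.rank K V + Module.rank K V := by
      rw [add_comm, ← LinearMap.rank_eq_of_surjective hsurj, rank_prod']
    have hgap := cardinal_add_one_lt_of_add_eq_add_self hrank h
    rw [decomposablePair_iff_kernel hsurj]
    exact ih _ ((self_le_add_right _ 1).trans_lt hgap) _ _ hgap rfl
  · exact decomposablePair_of_not_surjective
      (not_isSimpleModule_of_one_lt_rank ((self_le_add_left 1 _).trans_lt h)) hsurj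

end Rank

namespace KronRep

/-- The subrepresentation of `M` with underlying subspaces `A` and `B`. -/
def sub (M : KronRep) (A : Submodule ℂ M.V0) (B : Submodule ℂ M.V1)
    (hf : A ≤ B.comap M.f) (hg : A ≤ B.comap M.g) : KronRep where
  V0 := A
  V1 := B
  f := M.f.restrict hf
  g := M.g.restrict hg

theorem isZero_sub_iff {M : KronRep} {A : Submodule ℂ M.V0} {B : Submodule ℂ M.V1}
    {hf : A ≤ B.comap M.f} {hg : A ≤ B.comap M.g} :
    (M.sub A B hf hg).IsZero ↔ A = ⊥ ∧ B = ⊥ := by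
  rw [← Submodule.subsingleton_iff_eq_bot, ← Submodule.subsingleton_iff_eq_bot,
    subsingleton_iff_forall_eq 0, subsingleton_iff_forall_eq 0]
  rfl

theorem iso_prod_sub_of_isCompl (M : KronRep) {A A' : Submodule ℂ M.V0}
    {B B' : Submodule ℂ M.V1} (hA : IsCompl A A') (hB : IsCompl B B')
    (hf : A ≤ B.comap M.f) (hg : A ≤ B.comap M.g)
    (hf' : A' ≤ B'.comap M.f) (hg' : A' ≤ B'.comap M.g) :
    M.Iso ((M.sub A B hf hg).prod (M.sub A' B' hf' hg')) := by
  let eA := A.prodEquivOfIsCompl A' hA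
  let eB := B.prodEquivOfIsCompl B' hB
  have intertwines (φ : M.V0 →ₗ[ℂ] M.V1) (h : A ≤ B.comap φ) (h' : A' ≤ B'.comap φ) (x : M.V0) :
      eB.symm (φ x) = (φ.restrict h).prodMap (φ.restrict h') (eA.symm x) := by
    obtain ⟨⟨a, a'⟩, rfl⟩ := eA.surjective x
    rw [eA.symm_apply_apply, LinearEquiv.symm_apply_eq]
    exact map_add φ a.1 a'.1
  exact ⟨eA.symm, eB.symm, intertwines M.f hf hf', intertwines M.g hg hg'⟩

theorem not_indecomposable_of_decomposablePair {M : KronRep} (h : DecomposablePair M.f M.g) :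
    ¬ M.Indecomposable := by
  rintro ⟨-, hM⟩
  obtain ⟨⟨p, q⟩, he, he0, he1, hf, hg⟩ := h
  have hp : IsIdempotentElem p := congrArg Prod.fst he
  have hq : IsIdempotentElem q := congrArg Prod.snd he
  have range_le {φ : M.V0 →ₗ[ℂ] M.V1} (hφ : q ∘ₗ φ = φ ∘ₗ p) : p.range ≤ q.range.comap φ := by
    rintro _ ⟨x, rfl⟩
    exact ⟨φ x, LinearMap.congr_fun hφ x⟩
  have ker_le {φ : M.V0 →ₗ[ℂ] M.V1} (hφ : q ∘ₗ φ = φ ∘ₗ p) : p.ker ≤ q.ker.comap φ := by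
    rw [← LinearMap.ker_comp, hφ]
    exact LinearMap.ker_le_ker_comp p φ
  have hiso := M.iso_prod_sub_of_isCompl (LinearMap.IsIdempotentElem.isCompl hp)
    (LinearMap.IsIdempotentElem.isCompl hq) (range_le hf) (range_le hg) (ker_le hf) (ker_le hg)
  rcases hM _ _ hiso with hrange | hker
  · obtain ⟨hp0, hq0⟩ := isZero_sub_iff.1 hrange
    exact he0 (Prod.ext (LinearMap.range_eq_bot.1 hp0) (LinearMap.range_eq_bot.1 hq0))
  · obtain ⟨hp1, hq1⟩ := isZero_sub_iff.1 hker
    rw [LinearMap.IsIdempotentElem.ker_eq_range_one_sub hp, LinearMap.range_eq_bot,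
      sub_eq_zero] at hp1
    rw [LinearMap.IsIdempotentElem.ker_eq_range_one_sub hq, LinearMap.range_eq_bot,
      sub_eq_zero] at hq1
    exact he1 (Prod.ext hp1.symm hq1.symm)

end KronRep

theorem no_indecomposable_dim_gap_ge_two_general {K : Type*} {V W : Type u} [DivisionRing K]
    [AddCommGroup V] [AddCommGroup W] [Module K V] [Module K W] (f g : V →ₗ[K] W)
    (hgap : Module.rank K W + 1 < Module.rank K V ∨ Module.rank K V + 1 < Module.rank K W) :
    DecomposablePair f g :=
  hgap.elim (decomposablePair_of_rank_codomain_add_one_lt f g)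
    (decomposablePair_of_rank_domain_add_one_lt f g)

/-- there is no indecomposable representation of the Kronecker
quiver whose dimension vector `(dim V0, dim V1)` satisfies `|dim V0 - dim V1| ≥ 2`:
every such (finite-dimensional) representation is decomposable. -/
theorem no_indecomposable_dim_gap_ge_two (M : KronRep)
    (h0 : Module.Finite ℂ M.V0) (h1 : Module.Finite ℂ M.V1)
    (hgap : 2 ≤ |(Module.finrank ℂ M.V0 : ℤ) - (Module.finrank ℂ M.V1 : ℤ)|) :
    ¬ M.Indecomposable :=
  KronRep.not_indecomposable_of_decomposablePair <|
    no_indecomposable_dim_gap_ge_two_general M.f M.g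
      (rank_add_one_lt_or_of_two_le_abs_finrank_sub hgap)
end
end

section
/- Let s with 1 ≤ s ≤ p−1, a = ±1, and z = (z_1 : z_2) ∈ CP^1. The (p)-dimensional space with basis {a_n : 0 ≤ n ≤ s−1} ∪ {x_k : 0 ≤ k ≤ p−s−1} and action K a_n = a q^{s−1−2n}a_n, K x_k = −a q^{p−s−1−2k}x_k, E a_n = a[n][s−n]a_{n−1} for n ≥ 1, E a_0 = z_2 x_{p−s−1}, E x_k = −a[k][p−s−k]x_{k−1} (x_{−1}=0), F a_n = a_{n+1} for n ≤ s−2, F a_{s−1} = z_1 x_0, F x_k = x_{k+1} (x_{p−s}=0), defines a U_q(sl2)-module O^a_s(1,z): all defining relations of U_q(sl2) hold. -/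
noncomputable section

/-- `q = e^{iπ/p}`. -/
def qc (p : ℕ) : ℂ := Complex.exp (Complex.I * Real.pi / p)

/-- The q-integer `[n] = (q^n - q^{-n})/(q - q^{-1})`. -/
def qint (p n : ℕ) : ℂ := (qc p ^ n - (qc p)⁻¹ ^ n) / (qc p - (qc p)⁻¹)

/-- Basis index of `O^a_s(1,z)`: `inl n ↦ a_n` (`0 ≤ n ≤ s-1`),
`inr k ↦ x_k` (`0 ≤ k ≤ p-s-1`). -/
abbrev OIdx (p s : ℕ) : Type := Fin s ⊕ Fin (p - s)

/-- Action of `K` on `O^a_s(1,z)`: `K a_n = a q^{s-1-2n} a_n`,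
`K x_k = -a q^{p-s-1-2k} x_k`. -/
def OK (p s : ℕ) (a : ℂ) : Matrix (OIdx p s) (OIdx p s) ℂ :=
  Matrix.diagonal fun i =>
    match i with
    | Sum.inl n => a * qc p ^ ((s : ℤ) - 1 - 2 * (n : ℤ))
    | Sum.inr k => -a * qc p ^ (((p - s : ℕ) : ℤ) - 1 - 2 * (k : ℤ))

/-- The inverse of the action of `K` on `O^a_s(1,z)`. -/
def OKinv (p s : ℕ) (a : ℂ) : Matrix (OIdx p s) (OIdx p s) ℂ :=
  Matrix.diagonal fun i =>
    match i with
    | Sum.inl n => (a * qc p ^ ((s : ℤ) - 1 - 2 * (n : ℤ)))⁻¹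
    | Sum.inr k => (-a * qc p ^ (((p - s : ℕ) : ℤ) - 1 - 2 * (k : ℤ)))⁻¹

/-- Action of `E` on `O^a_s(1,z)`: `E a_n = a[n][s-n]a_{n-1}` for `n ≥ 1`,
`E a_0 = z₂ x_{p-s-1}`, `E x_k = -a[k][p-s-k]x_{k-1}` (`x_{-1} = 0`). -/
def OE (p s : ℕ) (a z₂ : ℂ) : Matrix (OIdx p s) (OIdx p s) ℂ :=
  Matrix.of fun i j =>
    match i, j with
    | Sum.inl m, Sum.inl n =>
        if (m : ℕ) + 1 = (n : ℕ) then a * qint p n * qint p (s - (n : ℕ)) else 0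
    | Sum.inr k, Sum.inl n =>
        if (n : ℕ) = 0 ∧ (k : ℕ) = p - s - 1 then z₂ else 0
    | Sum.inr m, Sum.inr k =>
        if (m : ℕ) + 1 = (k : ℕ) then -a * qint p k * qint p (p - s - (k : ℕ)) else 0
    | Sum.inl _, Sum.inr _ => 0

/-- Action of `F` on `O^a_s(1,z)`: `F a_n = a_{n+1}` for `n ≤ s-2`,
`F a_{s-1} = z₁ x_0`, `F x_k = x_{k+1}` (`x_{p-s} = 0`). -/
def OF (p s : ℕ) (z₁ : ℂ) : Matrix (OIdx p s) (OIdx p s) ℂ :=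
  Matrix.of fun i j =>
    match i, j with
    | Sum.inl m, Sum.inl n => if (m : ℕ) = (n : ℕ) + 1 then 1 else 0
    | Sum.inr k, Sum.inl n => if (n : ℕ) = s - 1 ∧ (k : ℕ) = 0 then z₁ else 0
    | Sum.inr m, Sum.inr k => if (m : ℕ) = (k : ℕ) + 1 then 1 else 0
    | Sum.inl _, Sum.inr _ => 0

/-!
In the order `a_0, …, a_{s-1}, x_0, …, x_{p-s-1}` the basis of `O^a_s(1,z)` is a cycle: up to
scalars, `F` moves each vector one step forward and `E` one step back. Since `q^p = -1`, each step
forward divides the eigenvalue of `K` by `q^2`, also across the two junctions, which gives the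
relations between `K` and `E`, `F`. Each of `E`, `F` kills one junction, so it is strictly
triangular in a suitable order of the `p` basis vectors and its `p`-th power vanishes.

The relation for `[E, F]` comes from the Casimir operator: both
`EF + (q⁻¹K + qK⁻¹)/(q - q⁻¹)^2` and `FE + (qK + q⁻¹K⁻¹)/(q - q⁻¹)^2`
act by the scalar `a(q^s + q^{-s})/(q - q⁻¹)^2`, and `[E, F]` is the difference.
-/

open Matrix

section Matrices

variable {ι κ R : Type*}

theorem pow_apply_ne_zero_imp_add_le [Semiring R] [Fintype ι] [DecidableEq ι] {M : Matrix ι ι R}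
    {h : ι → ℕ} (hM : ∀ i j, M i j ≠ 0 → h i < h j) (k : ℕ) {i j : ι} (hij : (M ^ k) i j ≠ 0) :
    h i + k ≤ h j := by
  induction k generalizing j with
  | zero =>
    have : i = j := by
      by_contra hne
      exact hij (by rw [pow_zero, one_apply_ne hne])
    simp [this]
  | succ k ih =>
    rw [pow_succ, mul_apply] at hij
    obtain ⟨l, -, hl⟩ := Finset.exists_ne_zero_of_sum_ne_zero hij
    have := ih (left_ne_zero_of_mul hl)
    have := hM l j (right_ne_zero_of_mul hl)
    lia

theorem pow_eq_zero_of_apply_ne_zero_imp_lt [Semiring R] [Fintype ι] [DecidableEq ι]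
    {M : Matrix ι ι R} {h : ι → ℕ} {p : ℕ} (hp : ∀ i, h i < p)
    (hM : ∀ i j, M i j ≠ 0 → h i < h j) : M ^ p = 0 := by
  ext i j
  by_contra hij
  have := pow_apply_ne_zero_imp_add_le hM p hij
  have := hp j
  lia

theorem diagonal_mul_mul_diagonal_inv [Field R] [Fintype ι] [DecidableEq ι] {w : ι → R}
    (hw : ∀ i, w i ≠ 0) {M : Matrix ι ι R} {c : R} (hM : ∀ i j, M i j ≠ 0 → w i = c * w j) :
    diagonal w * M * diagonal w⁻¹ = c • M := by
  ext i j
  rw [mul_diagonal, diagonal_mul, Matrix.smul_apply, smul_eq_mul, Pi.inv_apply]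
  by_cases hij : M i j = 0
  · simp [hij]
  · rw [hM i j hij, mul_right_comm, mul_assoc c, mul_inv_cancel₀ (hw j), mul_one]

theorem mul_eq_diagonal_of_injective [Semiring R] [Fintype κ] [DecidableEq ι] {σ : ι → κ}
    (hσ : Function.Injective σ) {M : Matrix ι κ R} {N : Matrix κ ι R}
    (hM : ∀ i j, M i j ≠ 0 → σ i = j) (hN : ∀ i j, N j i ≠ 0 → σ i = j) :
    M * N = diagonal fun i => M i (σ i) * N (σ i) i := by
  ext i k
  have hsum : (M * N) i k = M i (σ i) * N (σ i) k := by
    rw [mul_apply, Finset.sum_eq_single_of_mem (σ i) (Finset.mem_univ _)]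
    intro j _ hj
    rw [not_imp_comm.1 (hM i j) hj.symm, zero_mul]
  rw [hsum]
  obtain rfl | hik := eq_or_ne i k
  · rw [diagonal_apply_eq]
  · rw [diagonal_apply_ne _ hik, not_imp_comm.1 (hN k (σ i)) fun h => hik (hσ h.symm), mul_zero]

end Matrices

section QNumbers

variable {p : ℕ}

theorem qc_ne_zero (p : ℕ) : qc p ≠ 0 := Complex.exp_ne_zero _

theorem isPrimitiveRoot_qc (hp : p ≠ 0) : IsPrimitiveRoot (qc p) (2 * p) := by
  have hq : qc p = Complex.exp (2 * Real.pi * Complex.I / (2 * p : ℕ)) := by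
    rw [qc, Nat.cast_mul, Nat.cast_ofNat, mul_assoc, mul_div_mul_left _ _ two_ne_zero, mul_comm]
  rw [hq]
  exact Complex.isPrimitiveRoot_exp _ (mul_ne_zero two_ne_zero hp)

theorem qc_pow_self (hp : p ≠ 0) : qc p ^ p = -1 := by
  rw [qc, ← Complex.exp_nat_mul, mul_div_cancel₀ _ (Nat.cast_ne_zero.2 hp), mul_comm,
    Complex.exp_pi_mul_I]

theorem qc_sub_inv_ne_zero (hp : 2 ≤ p) : qc p - (qc p)⁻¹ ≠ 0 := by
  have hsq : qc p ^ 2 ≠ 1 :=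
    (isPrimitiveRoot_qc (by lia)).pow_ne_one_of_pos_of_lt two_ne_zero (by lia)
  rwa [sub_ne_zero, Ne, ← mul_eq_one_iff_eq_inv₀ (qc_ne_zero p), ← sq]

theorem qc_pow_sub (hp : p ≠ 0) {s : ℕ} (hsp : s ≤ p) : qc p ^ (p - s) = -(qc p ^ s)⁻¹ := by
  rw [pow_sub₀ _ (qc_ne_zero p) hsp, qc_pow_self hp, neg_one_mul]

theorem qint_zero (p : ℕ) : qint p 0 = 0 := by simp [qint]

/-- The scalar `a(q^s + q^{-s})/(q - q⁻¹)^2` by which the Casimir operator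
`EF + (q⁻¹K + qK⁻¹)/(q - q⁻¹)^2` acts on `O^a_s(1,z)`. -/
def casimirScalar (p s : ℕ) (a : ℂ) : ℂ :=
  a * (qc p ^ s + (qc p ^ s)⁻¹) / (qc p - (qc p)⁻¹) ^ 2

theorem casimirScalar_sub_neg (hp : p ≠ 0) {s : ℕ} (hsp : s ≤ p) (a : ℂ) :
    casimirScalar p (p - s) (-a) = casimirScalar p s a := by
  rw [casimirScalar, casimirScalar, qc_pow_sub hp hsp, inv_neg, inv_inv]
  ring

theorem mul_qint_mul_qint_eq_casimirScalar_sub {ε : ℂ} (hε : ε⁻¹ = ε) {r n : ℕ} (hn : n < r) :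
    ε * qint p (n + 1) * qint p (r - (n + 1)) =
      casimirScalar p r ε - ((qc p - (qc p)⁻¹) ^ 2)⁻¹ *
        ((qc p)⁻¹ * (ε * qc p ^ ((r : ℤ) - 1 - 2 * (n : ℤ))) +
          qc p * (ε * qc p ^ ((r : ℤ) - 1 - 2 * (n : ℤ)))⁻¹) := by
  obtain ⟨m, rfl⟩ : ∃ m, r = n + 1 + m := Nat.exists_eq_add_of_le hn
  have hexp : ((n + 1 + m : ℕ) : ℤ) - 1 - 2 * (n : ℤ) = (m : ℤ) - n := by push_cast; ring
  have hq := qc_ne_zero p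
  rw [Nat.add_sub_cancel_left, hexp, zpow_sub₀ hq, zpow_natCast, zpow_natCast, mul_inv, hε,
    casimirScalar, qint, qint]
  generalize (qc p - (qc p)⁻¹) = d
  simp only [pow_add, inv_pow, pow_one]
  have hqn := pow_ne_zero n hq
  have hqm := pow_ne_zero m hq
  field_simp
  ring

end QNumbers

/-- The eigenvalue of `K` on each basis vector of `O^a_s(1,z)`. -/
def weight (p s : ℕ) (a : ℂ) : OIdx p s → ℂ
  | Sum.inl n => a * qc p ^ ((s : ℤ) - 1 - 2 * (n : ℤ))
  | Sum.inr k => -a * qc p ^ (((p - s : ℕ) : ℤ) - 1 - 2 * (k : ℤ))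

/-- The position, counted from `0`, in the list `a_0, …, a_{s-1}, x_0, …, x_{p-s-1}` of the basis of
`O^a_s(1,z)`. -/
def position {p s : ℕ} : OIdx p s → ℕ
  | Sum.inl n => n
  | Sum.inr k => s + k

/-- The step forward in the cycle `a_0 → ⋯ → a_{s-1} → x_0 → ⋯ → x_{p-s-1} → a_0` on the basis of
`O^a_s(1,z)`. -/
def cyclicStep {p s : ℕ} (hs : 0 < s) (hsp : s < p) : Equiv.Perm (OIdx p s) where
  toFun
    | Sum.inl n => if h : (n : ℕ) + 1 < s then Sum.inl ⟨n + 1, h⟩ else Sum.inr ⟨0, by lia⟩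
    | Sum.inr k => if h : (k : ℕ) + 1 < p - s then Sum.inr ⟨k + 1, h⟩ else Sum.inl ⟨0, hs⟩
  invFun
    | Sum.inl n => if (n : ℕ) = 0 then Sum.inr ⟨p - s - 1, by lia⟩ else Sum.inl ⟨n - 1, by lia⟩
    | Sum.inr k => if (k : ℕ) = 0 then Sum.inl ⟨s - 1, by lia⟩ else Sum.inr ⟨k - 1, by lia⟩
  left_inv := by
    rintro (n | k) <;> grind
  right_inv := by
    rintro (n | k) <;> grind

section Relations

variable {p s : ℕ} {a : ℂ}

theorem OK_eq_diagonal : OK p s a = diagonal (weight p s a) := rfl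

theorem OKinv_eq_diagonal : OKinv p s a = diagonal (weight p s a)⁻¹ := by
  rw [OKinv]
  congr 1
  funext i
  cases i <;> rfl

theorem weight_ne_zero (ha : a ≠ 0) (i : OIdx p s) : weight p s a i ≠ 0 := by
  have hq (m : ℤ) : qc p ^ m ≠ 0 := zpow_ne_zero m (qc_ne_zero p)
  cases i
  · exact mul_ne_zero ha (hq _)
  · exact mul_ne_zero (neg_ne_zero.2 ha) (hq _)

theorem weight_eq_zpow_position (hp : p ≠ 0) (hsp : s ≤ p) (i : OIdx p s) :
    weight p s a i = a * qc p ^ ((s : ℤ) - 1 - 2 * (position i : ℤ)) := by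
  rcases i with n | k
  · rfl
  · have hexp : ((p - s : ℕ) : ℤ) - 1 - 2 * (k : ℤ) = s - 1 - 2 * ((s + k : ℕ) : ℤ) + p := by
      lia
    rw [weight, position, hexp, zpow_add₀ (qc_ne_zero p), zpow_natCast, qc_pow_self hp]
    ring

theorem weight_pow_two_mul (hp : p ≠ 0) (ha : a ^ 2 = 1) (i : OIdx p s) :
    weight p s a i ^ (2 * p) = 1 := by
  have hq (m : ℤ) : (qc p ^ m) ^ (2 * p) = 1 := by
    rw [← zpow_natCast, zpow_comm, zpow_natCast, (isPrimitiveRoot_qc hp).pow_eq_one,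
      _root_.one_zpow]
  have ha' : a ^ (2 * p) = 1 := by rw [pow_mul, ha, one_pow]
  cases i <;> simp [weight, mul_pow, hq, (even_two_mul p).neg_pow, ha']

section Cycle

variable (hs : 0 < s) (hsp : s < p)
include hs hsp

theorem position_cyclicStep (i : OIdx p s) :
    position (cyclicStep hs hsp i) = position i + 1 ∨
      position i + 1 = p ∧ position (cyclicStep hs hsp i) = 0 := by
  rcases i with i | i <;> simp only [cyclicStep, Equiv.coe_fn_mk] <;> split_ifs <;>
    simp only [position] <;> lia

theorem weight_eq_qc_sq_mul_weight_cyclicStep (i : OIdx p s) :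
    weight p s a i = qc p ^ 2 * weight p s a (cyclicStep hs hsp i) := by
  have hq := qc_ne_zero p
  have hp : p ≠ 0 := by lia
  rw [weight_eq_zpow_position hp hsp.le, weight_eq_zpow_position hp hsp.le, mul_left_comm,
    ← zpow_natCast, ← zpow_add₀ hq]
  obtain hstep | ⟨hlast, hstep⟩ := position_cyclicStep hs hsp i
  · rw [hstep]
    congr 2
    push_cast
    ring
  · have hexp : (s : ℤ) - 1 - 2 * (position i : ℤ) + (2 * p : ℕ) =
        (2 : ℕ) + (s - 1 - 2 * (0 : ℕ)) := by
      lia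
    rw [hstep, ← hexp, zpow_add₀ hq, zpow_natCast,
      (isPrimitiveRoot_qc hp).pow_eq_one, mul_one]

theorem cyclicStep_eq_of_OE_ne_zero {z₂ : ℂ} {i j : OIdx p s} (hij : OE p s a z₂ i j ≠ 0) :
    cyclicStep hs hsp i = j := by
  rcases i with i | i <;> rcases j with j | j <;>
    simp only [OE, of_apply, ne_eq, ite_eq_right_iff, not_forall, not_true_eq_false] at hij <;>
    simp only [cyclicStep, Equiv.coe_fn_mk] <;> grind

theorem cyclicStep_eq_of_OF_ne_zero {z₁ : ℂ} {i j : OIdx p s} (hij : OF p s z₁ j i ≠ 0) :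
    cyclicStep hs hsp i = j := by
  rcases i with i | i <;> rcases j with j | j <;>
    simp only [OF, of_apply, ne_eq, ite_eq_right_iff, not_forall, not_true_eq_false] at hij <;>
    simp only [cyclicStep, Equiv.coe_fn_mk] <;> grind

theorem OE_mul_OF_apply_cyclicStep_inl (z₁ z₂ : ℂ) (n : Fin s) :
    OE p s a z₂ (Sum.inl n) (cyclicStep hs hsp (Sum.inl n)) *
        OF p s z₁ (cyclicStep hs hsp (Sum.inl n)) (Sum.inl n) =
      a * qint p (n + 1) * qint p (s - (n + 1)) := by
  simp only [cyclicStep, Equiv.coe_fn_mk]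
  split_ifs with h
  · simp [OE, OF]
  · have hlast : s - ((n : ℕ) + 1) = 0 := by lia
    simp [OE, hlast, qint_zero]

theorem OE_mul_OF_apply_cyclicStep_inr (z₁ z₂ : ℂ) (k : Fin (p - s)) :
    OE p s a z₂ (Sum.inr k) (cyclicStep hs hsp (Sum.inr k)) *
        OF p s z₁ (cyclicStep hs hsp (Sum.inr k)) (Sum.inr k) =
      -a * qint p (k + 1) * qint p (p - s - (k + 1)) := by
  simp only [cyclicStep, Equiv.coe_fn_mk]
  split_ifs with h
  · simp [OE, OF]
  · have hlast : p - s - ((k : ℕ) + 1) = 0 := by lia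
    simp [OF, hlast, qint_zero]

theorem OE_mul_OF_apply_cyclicStep (ha : a⁻¹ = a) (z₁ z₂ : ℂ) (i : OIdx p s) :
    OE p s a z₂ i (cyclicStep hs hsp i) * OF p s z₁ (cyclicStep hs hsp i) i =
      casimirScalar p s a - ((qc p - (qc p)⁻¹) ^ 2)⁻¹ *
        ((qc p)⁻¹ * weight p s a i + qc p * (weight p s a i)⁻¹) := by
  rcases i with n | k
  · rw [OE_mul_OF_apply_cyclicStep_inl, mul_qint_mul_qint_eq_casimirScalar_sub ha n.2, weight]
  · have hna : (-a)⁻¹ = -a := by rw [inv_neg, ha]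
    rw [OE_mul_OF_apply_cyclicStep_inr, mul_qint_mul_qint_eq_casimirScalar_sub hna k.2,
      casimirScalar_sub_neg (by lia) hsp.le, weight]

theorem OE_mul_OF (ha : a⁻¹ = a) (z₁ z₂ : ℂ) :
    OE p s a z₂ * OF p s z₁ = casimirScalar p s a • 1 -
      ((qc p - (qc p)⁻¹) ^ 2)⁻¹ • ((qc p)⁻¹ • OK p s a + qc p • OKinv p s a) := by
  rw [mul_eq_diagonal_of_injective (cyclicStep hs hsp).injective
    (fun _ _ => cyclicStep_eq_of_OE_ne_zero hs hsp) (fun _ _ => cyclicStep_eq_of_OF_ne_zero hs hsp)]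
  simp only [OE_mul_OF_apply_cyclicStep hs hsp ha, OK_eq_diagonal, OKinv_eq_diagonal,
    smul_one_eq_diagonal, ← diagonal_smul, diagonal_add, diagonal_sub]
  rfl

theorem OF_mul_OE (ha : a⁻¹ = a) (z₁ z₂ : ℂ) :
    OF p s z₁ * OE p s a z₂ = casimirScalar p s a • 1 -
      ((qc p - (qc p)⁻¹) ^ 2)⁻¹ • (qc p • OK p s a + (qc p)⁻¹ • OKinv p s a) := by
  have hq := qc_ne_zero p
  set σ := cyclicStep hs hsp
  have hentry (i : OIdx p s) : OF p s z₁ i (σ.symm i) * OE p s a z₂ (σ.symm i) i =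
      casimirScalar p s a - ((qc p - (qc p)⁻¹) ^ 2)⁻¹ *
        (qc p * weight p s a i + (qc p)⁻¹ * (weight p s a i)⁻¹) := by
    have hEF := OE_mul_OF_apply_cyclicStep hs hsp ha z₁ z₂ (σ.symm i)
    rw [weight_eq_qc_sq_mul_weight_cyclicStep hs hsp (σ.symm i), σ.apply_symm_apply, mul_inv] at hEF
    rw [mul_comm, hEF]
    field_simp [hq]
  rw [mul_eq_diagonal_of_injective σ.symm.injective
    (fun _ _ h => σ.symm_apply_eq.2 (cyclicStep_eq_of_OF_ne_zero hs hsp h).symm)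
    (fun _ _ h => σ.symm_apply_eq.2 (cyclicStep_eq_of_OE_ne_zero hs hsp h).symm)]
  simp only [hentry, OK_eq_diagonal, OKinv_eq_diagonal, smul_one_eq_diagonal, ← diagonal_smul,
    diagonal_add, diagonal_sub]
  rfl

theorem OE_mul_OF_sub_OF_mul_OE (ha : a⁻¹ = a) (z₁ z₂ : ℂ) :
    OE p s a z₂ * OF p s z₁ - OF p s z₁ * OE p s a z₂ =
      (qc p - (qc p)⁻¹)⁻¹ • (OK p s a - OKinv p s a) := by
  set d := qc p - (qc p)⁻¹ with hd
  have hd0 : d ≠ 0 := qc_sub_inv_ne_zero (by lia)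
  have hdinv : d⁻¹ = (d ^ 2)⁻¹ * d := by rw [sq, mul_inv, inv_mul_cancel_right₀ hd0]
  rw [OE_mul_OF hs hsp ha, OF_mul_OE hs hsp ha, ← hd, hdinv, hd]
  module

theorem OK_mul_OE_mul_OKinv (ha : a ≠ 0) (z₂ : ℂ) :
    OK p s a * OE p s a z₂ * OKinv p s a = qc p ^ 2 • OE p s a z₂ := by
  rw [OK_eq_diagonal, OKinv_eq_diagonal]
  refine diagonal_mul_mul_diagonal_inv (weight_ne_zero ha) fun i j hij => ?_
  rw [← cyclicStep_eq_of_OE_ne_zero hs hsp hij, ← weight_eq_qc_sq_mul_weight_cyclicStep]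

theorem OK_mul_OF_mul_OKinv (ha : a ≠ 0) (z₁ : ℂ) :
    OK p s a * OF p s z₁ * OKinv p s a = (qc p ^ 2)⁻¹ • OF p s z₁ := by
  rw [OK_eq_diagonal, OKinv_eq_diagonal]
  refine diagonal_mul_mul_diagonal_inv (weight_ne_zero ha) fun i j hij => ?_
  rw [← cyclicStep_eq_of_OF_ne_zero hs hsp hij, weight_eq_qc_sq_mul_weight_cyclicStep hs hsp j,
    inv_mul_cancel_left₀ (pow_ne_zero 2 (qc_ne_zero p))]

end Cycle

theorem OK_mul_OKinv (ha : a ≠ 0) : OK p s a * OKinv p s a = 1 := by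
  rw [OK_eq_diagonal, OKinv_eq_diagonal, diagonal_mul_diagonal, ← diagonal_one]
  congr 1
  funext i
  exact mul_inv_cancel₀ (weight_ne_zero ha i)

theorem OK_pow_two_mul (hp : p ≠ 0) (ha : a ^ 2 = 1) : OK p s a ^ (2 * p) = 1 := by
  rw [OK_eq_diagonal, diagonal_pow, ← diagonal_one]
  congr 1
  funext i
  exact weight_pow_two_mul hp ha i

theorem OE_pow_eq_zero (hsp : s ≤ p) (z₂ : ℂ) : OE p s a z₂ ^ p = 0 := by
  refine pow_eq_zero_of_apply_ne_zero_imp_lt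
    (h := Sum.elim (fun n : Fin s => p - s + (n : ℕ)) fun k : Fin (p - s) => (k : ℕ)) ?_ ?_
  · rintro (n | k) <;> simp only [Sum.elim_inl, Sum.elim_inr] <;> lia
  · rintro (i | i) (j | j) hij <;>
      simp only [OE, of_apply, ne_eq, ite_eq_right_iff, not_forall, not_true_eq_false] at hij <;>
      simp only [Sum.elim_inl, Sum.elim_inr] <;> grind

theorem OF_pow_eq_zero (hsp : s ≤ p) (z₁ : ℂ) : OF p s z₁ ^ p = 0 := by
  rw [← transpose_eq_zero, transpose_pow]
  refine pow_eq_zero_of_apply_ne_zero_imp_lt (h := position) ?_ ?_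
  · rintro (n | k) <;> simp only [position] <;> lia
  · rintro (i | i) (j | j) hij <;>
      simp only [OF, transpose_apply, of_apply, ne_eq, ite_eq_right_iff, not_forall,
        not_true_eq_false] at hij <;>
      simp only [position] <;> grind

end Relations

/-- for `1 ≤ s ≤ p−1`, `a = ±1` and `z = (z₁ : z₂) ∈ ℂP¹`, the
formulas above define a `U_q(sl2)`-module `O^a_s(1,z)`: all defining relations
of `U_q(sl2)` hold for the operators. -/
theorem O_module_well_defined (p s : ℕ) (hp : 2 ≤ p) (hs1 : 1 ≤ s)
    (hsp : s ≤ p - 1) (a : ℂ) (ha : a = 1 ∨ a = -1)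
    (z₁ z₂ : ℂ) (hz : ¬(z₁ = 0 ∧ z₂ = 0)) :
    OK p s a * OKinv p s a = 1 ∧
    OE p s a z₂ ^ p = 0 ∧
    OF p s z₁ ^ p = 0 ∧
    OK p s a ^ (2 * p) = 1 ∧
    OK p s a * OE p s a z₂ * OKinv p s a = (qc p ^ 2) • OE p s a z₂ ∧
    OK p s a * OF p s z₁ * OKinv p s a = ((qc p ^ 2)⁻¹) • OF p s z₁ ∧
    OE p s a z₂ * OF p s z₁ - OF p s z₁ * OE p s a z₂ =
      ((qc p - (qc p)⁻¹)⁻¹) • (OK p s a - OKinv p s a) := by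
  have ha0 : a ≠ 0 := by rcases ha with rfl | rfl <;> norm_num
  have hasq : a ^ 2 = 1 := by rcases ha with rfl | rfl <;> norm_num
  have hainv : a⁻¹ = a := by rcases ha with rfl | rfl <;> norm_num
  have hlt : s < p := by lia
  exact ⟨OK_mul_OKinv ha0, OE_pow_eq_zero hlt.le z₂, OF_pow_eq_zero hlt.le z₁,
    OK_pow_two_mul (by lia) hasq, OK_mul_OE_mul_OKinv hs1 hlt ha0 z₂,
    OK_mul_OF_mul_OKinv hs1 hlt ha0 z₁, OE_mul_OF_sub_OF_mul_OE hs1 hlt hainv z₁ z₂⟩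
end
end
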